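/- Let p be a prime, k an algebraically closed field of characteristic p, F = FractionRing(𝕎 k), and σ : F ≃+* F the automorphism induced by the Witt vector Frobenius. Let E be a finite-dimensional F-vector space, Φ : E → E an additive bijection satisfying Φ(c • v) = σ(c) • Φ(v) for all c ∈ F, v ∈ E, and N : E → E an F-linear map satisfying N ∘ Φ = p • (Φ ∘ N). Suppose D ⊆ E is an F-subspace with Φ(D) ⊆ D such that: (i) N vanishes on D; (ii) the quotient E/D is one-dimensional and is spanned by a vector fixed by the map induced by Φ on E/D; and (iii) the only v ∈ D with p • Φ(v) = v is v = 0. Then N = 0 on all of E. -/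

import Mathlib

open WittVector

/-!
If `v` is fixed by `Φ` modulo `D ⊆ ker N`, then `x = N v` satisfies `p • Φ x = x`, so it suffices to
show that no nonzero vector of `E` does. Such vectors are excluded from `D` by assumption, and from
the trivial `φ`-module `E ⧸ D` because their coordinates would satisfy `p * σ c = c`, whereas the
Frobenius `σ` preserves the `p`-adic valuation.
-/

section FractionRing

open IsFractionRing
open scoped Isocrystal

theorem eq_zero_of_prime_mul_map_mul_eq_mul_map {R : Type*} [CommMonoidWithZero R]
    [IsCancelMulZero R] [WfDvdMonoid R] {ϖ : R} (hϖ : Prime ϖ) {φ : R ≃* R} (hφ : φ ϖ = ϖ)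
    {a b : R} (hb : b ≠ 0) (h : ϖ * (φ a * b) = a * φ b) : a = 0 := by
  by_contra ha
  have emultiplicity_map (x : R) : emultiplicity ϖ (φ x) = emultiplicity ϖ x := by
    simpa only [hφ] using emultiplicity_map_eq φ (a := ϖ) (b := x)
  have succ_eq_self : 1 + emultiplicity ϖ (a * b) = emultiplicity ϖ (a * b) := by
    have := congrArg (emultiplicity ϖ) h
    rwa [emultiplicity_mul hϖ, emultiplicity_mul hϖ, emultiplicity_mul hϖ, emultiplicity_map,
      emultiplicity_map, ← emultiplicity_mul hϖ,
      (FiniteMultiplicity.of_prime_left hϖ hϖ.ne_zero).emultiplicity_self] at this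
  rw [(FiniteMultiplicity.of_prime_left hϖ (mul_ne_zero ha hb)).emultiplicity_eq_multiplicity]
    at succ_eq_self
  norm_cast at succ_eq_self
  lia

theorem eq_zero_of_prime_mul_ringEquivOfRingEquiv_eq_self {R K : Type*} [CommRing R] [IsDomain R]
    [WfDvdMonoid R] [Field K] [Algebra R K] [IsFractionRing R K] {ϖ : R} (hϖ : Prime ϖ)
    {φ : R ≃+* R} (hφ : φ ϖ = ϖ) {c : K}
    (h : algebraMap R K ϖ * ringEquivOfRingEquiv φ c = c) : c = 0 := by
  obtain ⟨a, b, hb, rfl⟩ := div_surjective (A := R) c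
  have algebraMap_ne_zero {x : R} (hx : x ≠ 0) : algebraMap R K x ≠ 0 :=
    (map_ne_zero_iff _ (IsFractionRing.injective R K)).2 hx
  have hb0 : b ≠ 0 := nonZeroDivisors.ne_zero hb
  have cross_mul : ϖ * (φ a * b) = a * φ b := by
    apply IsFractionRing.injective R K
    rw [map_div₀, ringEquivOfRingEquiv_algebraMap, ringEquivOfRingEquiv_algebraMap,
      ← mul_div_assoc, div_eq_div_iff (algebraMap_ne_zero ((map_ne_zero_iff φ φ.injective).2 hb0))
        (algebraMap_ne_zero hb0)] at h
    simpa only [map_mul, mul_assoc] using h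
  have ha : a = 0 := eq_zero_of_prime_mul_map_mul_eq_mul_map hϖ (φ := φ.toMulEquiv) hφ hb0 cross_mul
  rw [ha, map_zero, zero_div]

theorem eq_zero_of_p_mul_frobenius_eq_self {p : ℕ} [Fact p.Prime] {k : Type*} [Field k] [CharP k p]
    [PerfectRing k p] {c : K(p, k)}
    (h : (p : K(p, k)) * FractionRing.frobenius p k c = c) : c = 0 :=
  eq_zero_of_prime_mul_ringEquivOfRingEquiv_eq_self (irreducible p).prime
    (map_natCast (frobeniusEquiv p k) p) (by rwa [map_natCast])

end FractionRing

section SemilinearEndomorphism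

open Module

theorem coord_semilinearMap_apply_of_diagonal {ι R V : Type*} [CommSemiring R] [AddCommMonoid V]
    [Module R V] {σ : R →+* R} {Ψ : V →ₛₗ[σ] V} (b : Basis ι R V) {a : ι → R}
    (hb : ∀ i, Ψ (b i) = a i • b i) (i : ι) (y : V) :
    b.coord i (Ψ y) = a i * σ (b.coord i y) := by
  classical
  have : (b.coord i).comp Ψ = a i • σ.toSemilinearMap.comp (b.coord i) := b.ext fun j ↦ by
    obtain rfl | hij := eq_or_ne j i
    · simp [hb]
    · simp [hb, hij]
  exact LinearMap.congr_fun this y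

theorem eq_zero_of_map_eq_self_of_span_eq_top {K V : Type*} [Field K] [AddCommGroup V] [Module K V]
    {σ : K →+* K} {q : K} (hσ : ∀ c, q * σ c = c → c = 0) {Ψ : V →ₛₗ[σ] V} {S : Set V}
    (hS : Submodule.span K S = ⊤) (hΨ : ∀ s ∈ S, Ψ s = q • s) {y : V} (hy : Ψ y = y) : y = 0 := by
  let b := Basis.ofSpan hS.ge
  have hb (i) : Ψ (b i) = q • b i := hΨ _ (Basis.ofSpan_subset hS.ge (Set.mem_range_self i))
  refine b.forall_coord_eq_zero_iff.1 fun i ↦ hσ _ ?_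
  rw [← coord_semilinearMap_apply_of_diagonal b hb, hy]

theorem eq_zero_of_map_eq_self_of_extension {R V : Type*} [Ring R] [AddCommGroup V] [Module R V]
    {σ : R →+* R} {Ψ : V →ₛₗ[σ] V} {D : Submodule R V} (hD : D ≤ D.comap Ψ)
    (hsub : ∀ x ∈ D, Ψ x = x → x = 0) (hquot : ∀ y, D.mapQ D Ψ hD y = y → y = 0) {x : V}
    (hx : Ψ x = x) : x = 0 :=
  hsub x ((Submodule.Quotient.mk_eq_zero D).1 <| hquot _ <| by rw [Submodule.mapQ_apply, hx]) hx

end SemilinearEndomorphism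

section MonodromyOperator

open scoped Isocrystal

theorem monodromy_vanishes_on_semistable_extension_general {p : ℕ} [Fact p.Prime] {k : Type*}
    [Field k] [CharP k p] [PerfectRing k p] {E : Type*} [AddCommGroup E]
    [Module K(p, k) E] {Φ : E →ᶠˡ[p, k] E} {N : E →ₗ[K(p, k)] E}
    (hN : ∀ v, N (Φ v) = (p : K(p, k)) • Φ (N v))
    {D : Submodule K(p, k) E} (hD : D ≤ D.comap Φ) (hDN : D ≤ N.ker)
    {S : Set E} (hS : D ⊔ Submodule.span K(p, k) S = ⊤) (hSfix : ∀ s ∈ S, Φ s - s ∈ D)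
    (hslope : ∀ v ∈ D, (p : K(p, k)) • Φ v = v → v = 0) : N = 0 := by
  let q : K(p, k) := p
  have hqD : D ≤ D.comap (q • Φ) := fun v hv ↦ D.smul_mem q (hD hv)
  have span_quotient : Submodule.span K(p, k) (D.mkQ '' S) = ⊤ := by
    rw [← Submodule.map_span, Submodule.map_mkQ_eq_top, hS]
  have quotient_map : ∀ y ∈ D.mkQ '' S, D.mapQ D (q • Φ) hqD y = q • y := by
    rintro _ ⟨s, hs, rfl⟩
    exact congrArg (q • ·) ((Submodule.Quotient.eq D).2 (hSfix s hs))
  have eq_zero_of_fixed {x : E} (hx : q • Φ x = x) : x = 0 :=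
    eq_zero_of_map_eq_self_of_extension hqD hslope (fun _ ↦ eq_zero_of_map_eq_self_of_span_eq_top
      (fun _ ↦ eq_zero_of_p_mul_frobenius_eq_self) span_quotient quotient_map) hx
  have hSN : S ⊆ N.ker := fun s hs ↦ eq_zero_of_fixed <| by
    rw [← hN, ← sub_eq_zero, ← map_sub]
    exact hDN (hSfix s hs)
  exact LinearMap.ker_eq_top.1 (top_le_iff.1 (hS ▸ sup_le hDN (Submodule.span_le.2 hSN)))

end MonodromyOperator

/-- Crux of Theorem 3.1(2): over an algebraically closed residue field, a semistable
`(φ,N)`-module extension of the unit object by a crystalline module `D` with no `φ`-slope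
equal to `−1` is crystalline. Concretely: with `F = FractionRing (𝕎 k)`, `σ` induced by
the Witt vector Frobenius, `Φ` a `σ`-semilinear additive bijection of a finite-dimensional
`F`-vector space `E` and `N` `F`-linear with `N ∘ Φ = p • (Φ ∘ N)`, if `D ⊆ E` is a
`Φ`-stable subspace on which `N` vanishes, whose quotient is one-dimensional and spanned
by a `Φ`-fixed vector, and `D` contains no nonzero `v` with `p • Φ v = v`, then `N = 0`. -/
theorem monodromy_vanishes_on_semistable_extension
    (p : ℕ) [Fact p.Prime] (k : Type*) [Field k] [CharP k p] [IsAlgClosed k]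
    (σ : FractionRing (WittVector p k) ≃+* FractionRing (WittVector p k))
    (hσ : σ = WittVector.FractionRing.frobenius p k)
    (E : Type*) [AddCommGroup E] [Module (FractionRing (WittVector p k)) E]
    [FiniteDimensional (FractionRing (WittVector p k)) E]
    (Φ : E ≃+ E)
    (hΦ : ∀ (c : FractionRing (WittVector p k)) (v : E), Φ (c • v) = σ c • Φ v)
    (N : E →ₗ[FractionRing (WittVector p k)] E)
    (hN : ∀ v : E, N (Φ v) = (p : FractionRing (WittVector p k)) • Φ (N v))
    (D : Submodule (FractionRing (WittVector p k)) E)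
    (hD : ∀ v ∈ D, Φ v ∈ D)
    (hNvanish : ∀ v ∈ D, N v = 0)
    (hquot : Module.finrank (FractionRing (WittVector p k)) (E ⧸ D) = 1)
    (hspan : ∃ v : E, v ∉ D ∧ Φ v - v ∈ D)
    (hslope : ∀ v ∈ D, (p : FractionRing (WittVector p k)) • Φ v = v → v = 0) :
    N = 0 := by
  subst hσ
  obtain ⟨v, hvD, hv⟩ := hspan
  exact monodromy_vanishes_on_semistable_extension_general (Φ := { Φ with map_smul' := hΦ })
    hN hD hNvanish ((Submodule.sup_span_singleton_eq_top_iff hvD).2 hquot)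
    (by rintro _ rfl; exact hv) hslope
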